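/- Let v be complex with v+1, v+2 not nonpositive integers. Then for all complex x with x ≠ 0: e^{−x} · ∑_{n≥0} (xⁿ/(1+v)_n) · L_n^{(v+1)}(x) = Γ(v+1) · x^{−v−1} · { (x+v+1)·J_{v+1}(2x) − x·J_{v+2}(2x) }, where the branch x^{−v−1} is chosen consistently with the branch used inside J_{v+1}(2x) and J_{v+2}(2x); equivalently, after cancelling the powers of x, the identity reads e^{−x} · ∑_{n≥0} (xⁿ/(1+v)_n) · L_n^{(v+1)}(x) = (x+v+1)·₀F₁[—; v+2; −x²]/(v+1) − (x²/((v+1)(v+2)))·₀F₁[—; v+3; −x²]. -/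

import Mathlib

open scoped BigOperators Nat

/-- Pochhammer (rising factorial) symbol `(a)_n`. -/
noncomputable def poch (a : ℂ) (n : ℕ) : ℂ := (ascPochhammer ℂ n).eval a

/-- General term of the generalized hypergeometric series `pFq`. -/
noncomputable def hypTerm (a b : List ℂ) (x : ℂ) (n : ℕ) : ℂ :=
  (a.map (fun c => poch c n)).prod / (b.map (fun c => poch c n)).prod * x ^ n / (n ! : ℂ)

/-- Generalized hypergeometric series `pFq[a; b; x]` (as a `tsum`). -/
noncomputable def hyp (a b : List ℂ) (x : ℂ) : ℂ := ∑' n : ℕ, hypTerm a b x n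

/-- Generalized Laguerre polynomial `L_n^{(v)}(x) = ((v+1)_n/n!)·₁F₁[−n; v+1; x]`. -/
noncomputable def Lag (n : ℕ) (v x : ℂ) : ℂ :=
  poch (v + 1) n / (n ! : ℂ) * hyp [-(n : ℂ)] [v + 1] x

/-!
Since `(-n)_k / n! = (-1)^k / (n - k)!` for `k ≤ n`, the coefficients `tⁿ / n! · ₁F₁[-n; b; x]` are
the Cauchy product of the series of `₀F₁[—; b; -xt]` and `eᵗ`, so
`∑ tⁿ / n! · ₁F₁[-n; b; x] = eᵗ · ₀F₁[—; b; -xt]`. For `b = c + 1` the quotient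
`(c + 1)_n / (c)_n = 1 + n / c` turns the Laguerre series into the image of the left-hand side under
`1 + c⁻¹ · t d/dt`. The Leibniz rule and `d/dz ₀F₁[—; b; z] = b⁻¹ · ₀F₁[—; b + 1; z]` evaluate it on
the right-hand side, and the theorem is the diagonal `t = x`.
-/

open Filter Topology Asymptotics
open Finset.HasAntidiagonal (antidiagonal mem_antidiagonal)

section CauchyProduct

theorem hasSum_sum_antidiagonal_mul {R : Type*} [NormedRing R] [CompleteSpace R] {f g : ℕ → R}
    (hf : Summable (‖f ·‖)) (hg : Summable (‖g ·‖)) :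
    HasSum (fun n ↦ ∑ p ∈ antidiagonal n, f p.1 * g p.2) ((∑' n, f n) * ∑' n, g n) := by
  rw [tsum_mul_tsum_eq_tsum_sum_antidiagonal_of_summable_norm hf hg]
  exact (summable_norm_sum_mul_antidiagonal_of_summable_norm hf hg).of_norm.hasSum

theorem natCast_mul_sum_antidiagonal_mul {R : Type*} [CommSemiring R] (f g : ℕ → R) (n : ℕ) :
    n * ∑ p ∈ antidiagonal n, f p.1 * g p.2 =
      ∑ p ∈ antidiagonal n, p.1 * f p.1 * g p.2 + ∑ p ∈ antidiagonal n, f p.1 * (p.2 * g p.2) := by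
  rw [Finset.mul_sum, ← Finset.sum_add_distrib]
  refine Finset.sum_congr rfl fun p hp ↦ ?_
  rw [← mem_antidiagonal.1 hp]
  push_cast
  ring

theorem hasSum_natCast_mul_sum_antidiagonal_mul {R : Type*} [NormedCommRing R] [CompleteSpace R]
    {f g : ℕ → R} (hf : Summable (‖f ·‖)) (hg : Summable (‖g ·‖))
    (hf' : Summable fun n : ℕ ↦ ‖n * f n‖) (hg' : Summable fun n : ℕ ↦ ‖n * g n‖) :
    HasSum (fun n : ℕ ↦ n * ∑ p ∈ antidiagonal n, f p.1 * g p.2)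
      ((∑' n : ℕ, n * f n) * ∑' n, g n + (∑' n, f n) * ∑' n : ℕ, n * g n) := by
  simp only [natCast_mul_sum_antidiagonal_mul]
  exact (hasSum_sum_antidiagonal_mul (f := fun n ↦ n * f n) hf' hg).add
    (hasSum_sum_antidiagonal_mul (g := fun n ↦ n * g n) hf hg')

end CauchyProduct

section Pochhammer

theorem poch_succ_right (a : ℂ) (n : ℕ) : poch a (n + 1) = poch a n * (a + n) :=
  ascPochhammer_succ_eval n a

theorem poch_succ_left (a : ℂ) (n : ℕ) : poch a (n + 1) = a * poch (a + 1) n := by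
  simp [poch, ascPochhammer_succ_left]

theorem poch_ne_zero {a : ℂ} (ha : ∀ k : ℕ, a ≠ -(k : ℂ)) (n : ℕ) : poch a n ≠ 0 := by
  rw [poch, Ne, ascPochhammer_eval_eq_zero_iff]
  rintro ⟨k, -, hk⟩
  exact ha k (eq_neg_of_add_eq_zero_right (by simp [hk]))

theorem poch_neg_natCast (n k : ℕ) : poch (-(n : ℂ)) k = (-1) ^ k * (n.descFactorial k : ℂ) := by
  rw [poch, ascPochhammer_eval_neg_eq_descPochhammer, descPochhammer_eval_eq_descFactorial]

theorem poch_neg_natCast_eq_zero {n k : ℕ} (h : n < k) : poch (-(n : ℂ)) k = 0 := by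
  simp [poch_neg_natCast, Nat.descFactorial_eq_zero_iff_lt.2 h]

theorem poch_neg_natCast_add_div_factorial (k m : ℕ) :
    poch (-((k + m : ℕ) : ℂ)) k / ((k + m)! : ℂ) = (-1) ^ k / (m ! : ℂ) := by
  have h : (m ! : ℂ) * ((k + m).descFactorial k : ℂ) = ((k + m)! : ℂ) := by
    have := Nat.factorial_mul_descFactorial (Nat.le_add_right k m)
    rw [Nat.add_sub_cancel_left] at this
    exact_mod_cast this
  rw [poch_neg_natCast, div_eq_div_iff (by exact_mod_cast (k + m).factorial_ne_zero)
    (by exact_mod_cast m.factorial_ne_zero), ← h]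
  ring

theorem poch_add_one_div_poch {c : ℂ} (hc : ∀ k : ℕ, c ≠ -(k : ℂ)) (n : ℕ) :
    poch (c + 1) n / poch c n = 1 + n / c := by
  have hc0 : c ≠ 0 := by simpa using hc 0
  have h : c * poch (c + 1) n = poch c n * (c + n) := by
    rw [← poch_succ_left, poch_succ_right]
  have := poch_ne_zero hc n
  field_simp
  exact h

end Pochhammer

section HypergeometricSeries

theorem hypTerm_succ (a b : List ℂ) (z : ℂ) (n : ℕ) :
    hypTerm a b z (n + 1) =
      (a.map (· + (n : ℂ))).prod / (b.map (· + (n : ℂ))).prod * (z / (n + 1)) *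
        hypTerm a b z n := by
  simp only [hypTerm, poch_succ_right, List.prod_map_mul, Nat.factorial_succ, pow_succ,
    Nat.cast_mul, Nat.cast_succ, div_eq_mul_inv, mul_inv]
  ring

theorem isEquivalent_prod_map_add_natCast (a : List ℂ) :
    (fun n : ℕ ↦ (a.map (· + (n : ℂ))).prod) ~[atTop] fun n ↦ (n : ℂ) ^ a.length := by
  have h (c : ℂ) : (fun n : ℕ ↦ c + (n : ℂ)) ~[atTop] fun n ↦ (n : ℂ) :=
    IsEquivalent.refl.const_add_of_norm_tendsto_atTop
      (tendsto_norm_atTop_iff_cobounded.2 tendsto_natCast_atTop_cobounded)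
  simpa using IsEquivalent.listProd (L := a) fun c _ ↦ h c

theorem tendsto_hypTerm_ratio_zero {a b : List ℂ} (hab : a.length ≤ b.length) (z : ℂ) :
    Tendsto (fun n : ℕ ↦ (a.map (· + (n : ℂ))).prod / (b.map (· + (n : ℂ))).prod * (z / (n + 1)))
      atTop (𝓝 0) := by
  have hpow : (fun n : ℕ ↦ (n : ℂ) ^ a.length / (n : ℂ) ^ b.length) =O[atTop] (1 : ℕ → ℂ) := by
    refine .of_bound 1 ((eventually_ge_atTop 1).mono fun n hn ↦ ?_)
    have hn' : (1 : ℝ) ≤ n := by exact_mod_cast hn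
    simpa using div_le_one_of_le₀ (pow_le_pow_right₀ hn' hab) (by positivity)
  have hlim : Tendsto (fun n : ℕ ↦ z / ((n : ℂ) + 1)) atTop (𝓝 0) := by
    simpa [div_eq_mul_inv] using
      (tendsto_one_div_add_atTop_nhds_zero_nat (𝕜 := ℂ)).const_mul z
  have hquot := ((isEquivalent_prod_map_add_natCast a).div
    (isEquivalent_prod_map_add_natCast b)).isBigO.trans hpow
  simpa using! hquot.mul_isLittleO ((isLittleO_one_iff ℂ).2 hlim)

/-- If some entry of `b` is a nonpositive integer, the terms are eventually `0` by `x / 0 = 0`. -/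
theorem summable_hypTerm {a b : List ℂ} (hab : a.length ≤ b.length) (z : ℂ) :
    Summable (hypTerm a b z) := by
  refine summable_of_ratio_norm_eventually_le (r := 1 / 2) (by norm_num) ?_
  filter_upwards [(tendsto_hypTerm_ratio_zero hab z).norm.eventually_le_const
    (by norm_num : ‖(0 : ℂ)‖ < 1 / 2)] with n hn
  rw [hypTerm_succ, norm_mul]
  gcongr

theorem natCast_succ_mul_hypTerm_succ (a b : List ℂ) (z : ℂ) (n : ℕ) :
    ((n + 1 : ℕ) : ℂ) * hypTerm a b z (n + 1) =
      z * (a.prod / b.prod) * hypTerm (a.map (· + 1)) (b.map (· + 1)) z n := by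
  have hprod (l : List ℂ) : (l.map (poch · (n + 1))).prod =
      l.prod * ((l.map (· + 1)).map (poch · n)).prod := by
    simp [poch_succ_left, List.prod_map_mul, Function.comp_def]
  have hn : (n : ℂ) + 1 ≠ 0 := n.cast_add_one_ne_zero
  simp only [hypTerm, hprod, Nat.factorial_succ, pow_succ, Nat.cast_mul, Nat.cast_succ]
  field_simp

theorem hasSum_natCast_mul_hypTerm {a b : List ℂ} {z : ℂ}
    (h : Summable (hypTerm (a.map (· + 1)) (b.map (· + 1)) z)) :
    HasSum (fun n : ℕ ↦ n * hypTerm a b z n)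
      (z * (a.prod / b.prod) * hyp (a.map (· + 1)) (b.map (· + 1)) z) := by
  rw [← hasSum_nat_add_iff' 1]
  simpa only [natCast_succ_mul_hypTerm_succ, Finset.sum_range_one, Nat.cast_zero, zero_mul,
    sub_zero] using! h.hasSum.mul_left (z * (a.prod / b.prod))

theorem hyp_nil_nil (z : ℂ) : hyp [] [] z = Complex.exp z := by
  simp [hyp, hypTerm, Complex.exp_eq_exp_ℂ, NormedSpace.exp_eq_tsum_div]

end HypergeometricSeries

section GeneratingFunction

theorem pow_div_factorial_mul_hypTerm_neg_natCast_cons (a b : List ℂ) (x t : ℂ) (k m : ℕ) :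
    t ^ (k + m) / ((k + m)! : ℂ) * hypTerm (-((k + m : ℕ) : ℂ) :: a) b x k =
      hypTerm a b (-(x * t)) k * hypTerm [] [] t m := by
  have h := poch_neg_natCast_add_div_factorial k m
  simp only [hypTerm, List.map_cons, List.prod_cons, List.map_nil, List.prod_nil, neg_pow (x * t),
    mul_pow, pow_add, div_one, one_mul]
  linear_combination ((a.map (poch · k)).prod / (b.map (poch · k)).prod * x ^ k / (k ! : ℂ) *
    t ^ k * t ^ m) * h

theorem pow_div_factorial_mul_hyp_neg_natCast_cons (a b : List ℂ) (x t : ℂ) (n : ℕ) :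
    t ^ n / (n ! : ℂ) * hyp (-(n : ℂ) :: a) b x =
      ∑ p ∈ antidiagonal n, hypTerm a b (-(x * t)) p.1 * hypTerm [] [] t p.2 := by
  have hterm : ∀ k ∉ Finset.range (n + 1), hypTerm (-(n : ℂ) :: a) b x k = 0 := fun k hk ↦ by
    have hnk : n < k := by simpa using hk
    simp [hypTerm, poch_neg_natCast_eq_zero hnk]
  rw [hyp, tsum_eq_sum hterm, Finset.mul_sum,
    ← Finset.Nat.sum_antidiagonal_eq_sum_range_succ_mk
      (fun p ↦ t ^ n / (n ! : ℂ) * hypTerm (-(n : ℂ) :: a) b x p.1)]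
  refine Finset.sum_congr rfl fun p hp ↦ ?_
  rw [← mem_antidiagonal.1 hp, pow_div_factorial_mul_hypTerm_neg_natCast_cons]

theorem hasSum_pow_div_factorial_mul_hyp_neg_natCast_cons {a b : List ℂ}
    (hab : a.length ≤ b.length) (x t : ℂ) :
    HasSum (fun n : ℕ ↦ t ^ n / (n ! : ℂ) * hyp (-(n : ℂ) :: a) b x)
      (Complex.exp t * hyp a b (-(x * t))) := by
  simp only [pow_div_factorial_mul_hyp_neg_natCast_cons]
  rw [mul_comm (Complex.exp t), ← hyp_nil_nil, hyp, hyp]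
  exact hasSum_sum_antidiagonal_mul (summable_hypTerm hab (-(x * t))).norm
    (summable_hypTerm (le_refl ([] : List ℂ).length) t).norm

theorem hasSum_natCast_mul_pow_div_factorial_mul_hyp_neg_natCast_cons {a b : List ℂ}
    (hab : a.length ≤ b.length) (x t : ℂ) :
    HasSum (fun n : ℕ ↦ n * (t ^ n / (n ! : ℂ) * hyp (-(n : ℂ) :: a) b x))
      (Complex.exp t * (t * hyp a b (-(x * t)) -
        x * t * (a.prod / b.prod) * hyp (a.map (· + 1)) (b.map (· + 1)) (-(x * t)))) := by
  have hF := summable_hypTerm hab (-(x * t))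
  have hE := summable_hypTerm (le_refl ([] : List ℂ).length) t
  have hF' := hasSum_natCast_mul_hypTerm (a := a) (b := b)
    (summable_hypTerm (by simpa using hab) (-(x * t)))
  have hE' := hasSum_natCast_mul_hypTerm (a := []) (b := []) hE
  simp only [pow_div_factorial_mul_hyp_neg_natCast_cons]
  convert! hasSum_natCast_mul_sum_antidiagonal_mul hF.norm hE.norm hF'.summable.norm
    hE'.summable.norm using 1
  rw [hF'.tsum_eq, hE'.tsum_eq, ← hyp, ← hyp]
  simp only [List.map_nil, List.prod_nil, hyp_nil_nil]
  ring

end GeneratingFunction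

theorem pow_div_poch_mul_Lag {c : ℂ} (hc : ∀ k : ℕ, c ≠ -(k : ℂ)) (x t : ℂ) (n : ℕ) :
    t ^ n / poch c n * Lag n c x =
      (1 + n / c) * (t ^ n / (n ! : ℂ) * hyp [-(n : ℂ)] [c + 1] x) := by
  rw [Lag, ← poch_add_one_div_poch hc]
  ring

theorem stmt_12_general {v : ℂ} (hv : ∀ k : ℕ, v + 1 ≠ -(k : ℂ)) (x t : ℂ) :
    HasSum (fun n : ℕ ↦ t ^ n / poch (1 + v) n * Lag n (v + 1) x)
      (Complex.exp t * ((t + v + 1) * hyp [] [v + 2] (-(x * t)) / (v + 1) -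
        x * t / ((v + 1) * (v + 2)) * hyp [] [v + 3] (-(x * t)))) := by
  have hv0 : v + 1 ≠ 0 := by simpa using hv 0
  have h12 : v + 1 + 1 = v + 2 := by ring
  have h23 : v + 2 + 1 = v + 3 := by ring
  have hlen : ([] : List ℂ).length ≤ [v + 2].length := by simp
  have hsum := hasSum_pow_div_factorial_mul_hyp_neg_natCast_cons hlen x t
  have hsum' := hasSum_natCast_mul_pow_div_factorial_mul_hyp_neg_natCast_cons hlen x t
  simp only [List.map_cons, List.map_nil, List.prod_cons, List.prod_nil, mul_one, h23] at hsum'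
  simp only [add_comm 1 v, pow_div_poch_mul_Lag hv, h12]
  convert! hsum.add (hsum'.div_const (v + 1)) using 1
  · ext n
    ring
  · field_simp
    ring

/-- Special case `e = v+1` of Theorem 1 (equation (5.1)), in the equivalent form
obtained after cancelling the powers of `x`. -/
theorem stmt_12 (v : ℂ)
    (hv1 : ∀ k : ℕ, v + 1 ≠ -(k : ℂ)) (hv2 : ∀ k : ℕ, v + 2 ≠ -(k : ℂ))
    (x : ℂ) (hx : x ≠ 0) :
    (Complex.exp (-x) * ∑' n : ℕ, x ^ n / poch (1 + v) n * Lag n (v + 1) x) =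
      (x + v + 1) * hyp [] [v + 2] (-x ^ 2) / (v + 1) -
        x ^ 2 / ((v + 1) * (v + 2)) * hyp [] [v + 3] (-x ^ 2) := by
  rw [(stmt_12_general hv1 x x).tsum_eq, ← mul_assoc, ← Complex.exp_add, neg_add_cancel,
    Complex.exp_zero, one_mul, ← pow_two]
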